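/- The series identity ∑_{n≥1} (−1/4)^n · (1)_n / ((1/2)_n) · [ (10n−3) H_n / (3 n² (2n−1)) − 4(3n−1)/(3 n² (2n−1)²) ] = ζ(3)/5 holds, where ζ is the Riemann zeta function. -/

import Mathlib

/-- The rising factorial (Pochhammer symbol) `(a)ₙ = a(a+1)⋯(a+n-1)`. -/
noncomputable def risingFactorial (a : ℝ) (n : ℕ) : ℝ :=
  ∏ i ∈ Finset.range n, (a + i)

/-- The generalized harmonic number `H_n^{(s)} = ∑_{k=1}^n 1/k^s`. -/
noncomputable def genHarmonic (s n : ℕ) : ℝ :=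
  ∑ k ∈ Finset.range n, 1 / ((k : ℝ) + 1) ^ s

open Filter Topology Finset

lemma genHarmonic_one_zero : genHarmonic 1 0 = 0 := by simp [genHarmonic]

lemma genHarmonic_one_succ (n : ℕ) :
    genHarmonic 1 (n + 1) = genHarmonic 1 n + 1 / ((n : ℝ) + 1) := by
  simp [genHarmonic, Finset.sum_range_succ]

lemma genHarmonic_one_nonneg (n : ℕ) : 0 ≤ genHarmonic 1 n :=
  Finset.sum_nonneg fun _ _ => by positivity

lemma hasSum_one_div_sub_one_div_succ (N : ℕ) :
    HasSum (fun k : ℕ => 1 / ((k : ℝ) + N + 1) - 1 / ((k : ℝ) + N + 2)) (1 / ((N : ℝ) + 1)) := by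
  rw [hasSum_iff_tendsto_nat_of_nonneg]
  · have hsum : ∀ K : ℕ, ∑ k ∈ range K, (1 / ((k : ℝ) + N + 1) - 1 / ((k : ℝ) + N + 2)) =
        1 / ((N : ℝ) + 1) - 1 / ((K : ℝ) + (N + 1)) := by
      intro K
      induction K with
      | zero => simp
      | succ K ih =>
        rw [Finset.sum_range_succ, ih]
        push_cast
        ring
    simp_rw [hsum]
    have hlim : Tendsto (fun K : ℕ => 1 / ((K : ℝ) + (N + 1))) atTop (𝓝 0) := by
      simp_rw [one_div]
      exact tendsto_inv_atTop_zero.comp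
        (tendsto_atTop_add_const_right _ _ tendsto_natCast_atTop_atTop)
    simpa using tendsto_const_nhds.sub hlim
  · intro k
    rw [sub_nonneg]
    gcongr
    norm_num

lemma hasSum_one_div_sub_one_div_add (N : ℕ) :
    HasSum (fun k : ℕ => 1 / ((k : ℝ) + 1) - 1 / ((k : ℝ) + N + 1)) (genHarmonic 1 N) := by
  induction N with
  | zero => simp [genHarmonic_one_zero]
  | succ N ih =>
    rw [genHarmonic_one_succ]
    convert ih.add (hasSum_one_div_sub_one_div_succ N) using 2 with k
    push_cast
    ring

lemma summable_one_div_mul_mul_add : Summable fun p : ℕ × ℕ =>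
    1 / (((p.1 : ℝ) + 1) * ((p.2 : ℝ) + 1) * ((p.1 : ℝ) + p.2 + 2)) := by
  have hs : Summable fun n : ℕ => 1 / (((n : ℝ) + 1) * √((n : ℝ) + 1)) := by
    have h := (summable_nat_add_iff 1).2 (Real.summable_one_div_nat_rpow.2
      (show (1 : ℝ) < 3 / 2 by norm_num))
    refine h.congr fun n => ?_
    have hn : (0 : ℝ) < (n : ℝ) + 1 := by positivity
    rw [Real.sqrt_eq_rpow, ← Real.rpow_one_add' hn.le (by norm_num)]
    norm_num
  refine (hs.mul_of_nonneg hs (fun _ => by positivity) (fun _ => by positivity)).of_nonneg_of_le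
    (fun _ => by positivity) ?_
  rintro ⟨n, k⟩
  dsimp only
  have hn : (0 : ℝ) < (n : ℝ) + 1 := by positivity
  have hk : (0 : ℝ) < (k : ℝ) + 1 := by positivity
  have hn' := Real.sqrt_pos.2 hn
  have hk' := Real.sqrt_pos.2 hk
  rw [div_mul_div_comm, one_mul]
  refine one_div_le_one_div_of_le (by positivity) ?_
  calc ((n : ℝ) + 1) * √((n : ℝ) + 1) * (((k : ℝ) + 1) * √((k : ℝ) + 1))
      = ((n : ℝ) + 1) * ((k : ℝ) + 1) * (√((n : ℝ) + 1) * √((k : ℝ) + 1)) := by ring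
    _ ≤ ((n : ℝ) + 1) * ((k : ℝ) + 1) * ((n : ℝ) + k + 2) := by
        gcongr
        nlinarith [Real.sq_sqrt hn.le, Real.sq_sqrt hk.le,
          sq_nonneg (√((n : ℝ) + 1) - √((k : ℝ) + 1))]

lemma summable_one_div_succ_cube : Summable fun n : ℕ => 1 / ((n : ℝ) + 1) ^ 3 := by
  have h := (summable_nat_add_iff 1).2 (Real.summable_one_div_nat_pow.2 (show 1 < 3 by norm_num))
  simpa using h

/-- Euler's evaluation `∑ H_k / (k+1)^2 = ζ(3)`. -/
lemma hasSum_genHarmonic_div_sq :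
    HasSum (fun k : ℕ => genHarmonic 1 k / ((k : ℝ) + 1) ^ 2) (∑' n : ℕ, 1 / ((n : ℝ) + 1) ^ 3) := by
  set Z := ∑' n : ℕ, 1 / ((n : ℝ) + 1) ^ 3
  let f : ℕ × ℕ → ℝ := fun p => 1 / (((p.1 : ℝ) + 1) * ((p.2 : ℝ) + 1) * ((p.1 : ℝ) + p.2 + 2))
  let g : ℕ × ℕ → ℝ := fun p => 1 / (((p.1 : ℝ) + 1) * ((p.1 : ℝ) + p.2 + 2) ^ 2)
  have hf : Summable f := summable_one_div_mul_mul_add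
  have hfg : ∀ p, f p = g p + g p.swap := by
    rintro ⟨n, k⟩
    simp only [f, g, Prod.swap]
    field_simp
    ring
  have hg : Summable g := hf.of_nonneg_of_le (fun _ => by positivity) fun p => by
    rw [hfg p]
    exact le_add_of_nonneg_right (by positivity)
  have hrow : ∀ n : ℕ, HasSum (fun k => f (n, k)) (genHarmonic 1 (n + 1) / ((n : ℝ) + 1) ^ 2) := by
    intro n
    refine ((hasSum_one_div_sub_one_div_add (n + 1)).div_const (((n : ℝ) + 1) ^ 2)).congr_fun
      fun k => ?_
    simp only [f]
    push_cast
    field_simp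
    ring
  have hdiag : ∀ m : ℕ, HasSum (fun p : antidiagonal m => g p)
      (genHarmonic 1 (m + 1) / (((m + 1 : ℕ) : ℝ) + 1) ^ 2) := by
    intro m
    convert hasSum_fintype _ using 1
    rw [Finset.sum_coe_sort (antidiagonal m) g, Finset.Nat.sum_antidiagonal_eq_sum_range_succ_mk,
      genHarmonic, Finset.sum_div]
    refine Finset.sum_congr rfl fun i hi => ?_
    have hi' : i ≤ m := by simpa [Nat.lt_succ_iff] using hi
    simp only [g]
    push_cast [hi']
    rw [div_div, pow_one]
    ring_nf
  have hsumf := hf.hasSum.prod_fiberwise hrow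
  have hsumg : HasSum (fun m : ℕ => genHarmonic 1 (m + 1) / (((m + 1 : ℕ) : ℝ) + 1) ^ 2)
      (∑' p, g p) :=
    (HasAntidiagonal.sigmaAntidiagonalEquivProd.hasSum_iff.2 hg.hasSum).sigma hdiag
  have hE : HasSum (fun k : ℕ => genHarmonic 1 k / ((k : ℝ) + 1) ^ 2) (∑' p, g p) := by
    rw [← hasSum_nat_add_iff' 1]
    simpa [genHarmonic_one_zero] using hsumg
  have htwo : ∑' p, f p = ∑' p, g p + ∑' p, g p := by
    have hswap : HasSum (fun p : ℕ × ℕ => g p.swap) (∑' p, g p) :=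
      (Equiv.prodComm ℕ ℕ).hasSum_iff.2 hg.hasSum
    exact ((hg.hasSum.add hswap).congr_fun hfg).tsum_eq
  have hsplit : HasSum (fun n : ℕ => genHarmonic 1 (n + 1) / ((n : ℝ) + 1) ^ 2)
      (∑' p, g p + Z) := by
    convert hE.add summable_one_div_succ_cube.hasSum using 2 with n
    rw [genHarmonic_one_succ]
    field_simp
  have hZ : ∑' p, g p = Z := by
    have := hsumf.unique hsplit
    linarith
  rwa [hZ] at hE

lemma genHarmonic_one_mono : Monotone (genHarmonic 1) :=
  monotone_nat_of_le_succ fun n => by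
    rw [genHarmonic_one_succ]
    exact le_add_of_nonneg_right (by positivity)

lemma genHarmonic_one_le (n : ℕ) : genHarmonic 1 n ≤ n := by
  induction n with
  | zero => simp [genHarmonic_one_zero]
  | succ n ih =>
    rw [genHarmonic_one_succ]
    push_cast
    gcongr
    rw [div_le_one (by positivity)]
    linarith [n.cast_nonneg (α := ℝ)]

lemma tendsto_genHarmonic_div :
    Tendsto (fun n : ℕ => (genHarmonic 1 n + 1) / ((n : ℝ) + 1)) atTop (𝓝 0) := by
  have h := tendsto_one_div_add_atTop_nhds_zero_nat (𝕜 := ℝ)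
  have hc := h.cesaro
  have hsum : Tendsto (fun n : ℕ => (n : ℝ)⁻¹ * genHarmonic 1 n + 1 / ((n : ℝ) + 1)) atTop (𝓝 0) := by
    simpa [genHarmonic] using hc.add h
  refine squeeze_zero' (Eventually.of_forall fun n => ?_) ?_ hsum
  · have := genHarmonic_one_nonneg n
    positivity
  · filter_upwards [eventually_gt_atTop 0] with n hn
    have hn' : (0 : ℝ) < n := by exact_mod_cast hn
    have := genHarmonic_one_nonneg n
    rw [add_div, inv_mul_eq_div]
    gcongr
    linarith

/-- The factorial quotient `k! n!² / (2n+k+1)!`. -/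
noncomputable def wzWeight (n k : ℕ) : ℝ :=
  (k.factorial : ℝ) * (n.factorial : ℝ) ^ 2 / ((2 * n + k + 1).factorial : ℝ)

lemma wzWeight_nonneg (n k : ℕ) : 0 ≤ wzWeight n k := by
  unfold wzWeight
  positivity

lemma wzWeight_succ_right (n k : ℕ) :
    wzWeight n (k + 1) = wzWeight n k * ((k : ℝ) + 1) / (2 * n + k + 2) := by
  unfold wzWeight
  rw [show 2 * n + (k + 1) + 1 = (2 * n + k + 1) + 1 by ring, Nat.factorial_succ (2 * n + k + 1),
    Nat.factorial_succ k]
  have := Nat.cast_ne_zero (R := ℝ).2 (2 * n + k + 1).factorial_ne_zero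
  push_cast
  field_simp
  ring

lemma wzWeight_succ_left (n k : ℕ) :
    wzWeight (n + 1) k =
      wzWeight n k * ((n : ℝ) + 1) ^ 2 / ((2 * n + k + 2) * (2 * n + k + 3)) := by
  unfold wzWeight
  rw [show 2 * (n + 1) + k + 1 = (2 * n + k + 1) + 1 + 1 by ring,
    Nat.factorial_succ (2 * n + k + 1 + 1), Nat.factorial_succ (2 * n + k + 1),
    Nat.factorial_succ n]
  have := Nat.cast_ne_zero (R := ℝ).2 (2 * n + k + 1).factorial_ne_zero
  push_cast
  field_simp
  ring

lemma wzWeight_le (n k : ℕ) : wzWeight n k ≤ (1 / 2) ^ n / ((2 * n : ℝ) + k + 1) := by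
  induction n with
  | zero =>
    have := Nat.cast_ne_zero (R := ℝ).2 k.factorial_ne_zero
    simp only [wzWeight, Nat.factorial_succ, mul_zero, zero_add]
    push_cast
    apply le_of_eq
    field_simp
    simp
  | succ n ih =>
    rw [wzWeight_succ_left]
    calc wzWeight n k * ((n : ℝ) + 1) ^ 2 / ((2 * n + k + 2) * (2 * n + k + 3))
        ≤ (1 / 2) ^ n / ((2 * n : ℝ) + k + 1) * ((n : ℝ) + 1) ^ 2 /
            ((2 * n + k + 2) * (2 * n + k + 3)) := by gcongr
      _ = (1 / 2) ^ n / ((2 * n : ℝ) + k + 3) *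
            (((n : ℝ) + 1) ^ 2 / ((2 * n + k + 1) * (2 * n + k + 2))) := by
          field_simp
      _ ≤ (1 / 2) ^ n / ((2 * n : ℝ) + k + 3) * (1 / 2) := by
          refine mul_le_mul_of_nonneg_left ?_ (by positivity)
          rw [div_le_div_iff₀ (by positivity) (by positivity)]
          have hn : (0 : ℝ) ≤ n := n.cast_nonneg
          have hk : (0 : ℝ) ≤ k := k.cast_nonneg
          nlinarith [mul_nonneg hn hk, mul_nonneg hn hn, mul_nonneg hk hk]
      _ = _ := by
          push_cast
          rw [pow_succ]
          ring

/-- The first member of a Wilf–Zeilberger pair, obtained by differentiating the summand of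
Dougall's `₂H₂` sum with respect to its parameters. -/
noncomputable def wzF (n k : ℕ) : ℝ :=
  (-1) ^ n * wzWeight n k / ((n : ℝ) + k + 1) *
    (2 / 3 * (genHarmonic 1 k - genHarmonic 1 n) - 7 / 15 / ((n : ℝ) + k + 1))

/-- The rational factor by which `wzG` depends on the harmonic numbers. -/
noncomputable def wzCert (n k : ℕ) : ℝ :=
  ((n : ℝ) + 1) / (n + k + 1) + (6 * n + 5) / (2 * (2 * n + 1)) + k / (2 * n + 1)

/-- The part of `wzG` that is free of harmonic numbers. -/
noncomputable def wzRem (n k : ℕ) : ℝ :=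
  2 / 3 * (1 / (2 * (n : ℝ) + 1) ^ 2 + (6 * n + 5) / (4 * (2 * n + 1) * (n + 1)) +
      k / (2 * n + 1) ^ 2) -
    7 / 15 * ((2 * n + 2 + k) / ((n : ℝ) + k + 1) ^ 2 + 1 / (2 * n + 2))

/-- The second member of the Wilf–Zeilberger pair. -/
noncomputable def wzG (n k : ℕ) : ℝ :=
  (-1) ^ n * wzWeight n k / (2 * (n : ℝ) + k + 2) *
    (2 / 3 * (genHarmonic 1 k - genHarmonic 1 n) * wzCert n k + wzRem n k)

lemma wz_pair (n k : ℕ) : wzF (n + 1) k - wzF n k = wzG n (k + 1) - wzG n k := by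
  simp only [wzF, wzG, wzCert, wzRem, wzWeight_succ_left, wzWeight_succ_right,
    genHarmonic_one_succ, pow_succ]
  push_cast
  generalize wzWeight n k = w
  generalize genHarmonic 1 k = x
  generalize genHarmonic 1 n = y
  generalize (-1 : ℝ) ^ n = s
  have hn : (0 : ℝ) ≤ n := n.cast_nonneg
  have hk : (0 : ℝ) ≤ k := k.cast_nonneg
  generalize (n : ℝ) = a at *
  generalize (k : ℝ) = b at *
  field_simp
  ring

lemma wz_sum (N K : ℕ) :
    ∑ n ∈ range N, wzG n 0 = ∑ k ∈ range K, wzF 0 k - ∑ k ∈ range K, wzF N k +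
      ∑ n ∈ range N, wzG n K := by
  induction N with
  | zero => simp
  | succ N ih =>
    have h : ∑ k ∈ range K, wzF (N + 1) k - ∑ k ∈ range K, wzF N k = wzG N K - wzG N 0 := by
      rw [← Finset.sum_sub_distrib, ← Finset.sum_range_sub (wzG N)]
      exact Finset.sum_congr rfl fun k _ => wz_pair N k
    rw [Finset.sum_range_succ, Finset.sum_range_succ, ih]
    linarith

lemma abs_genHarmonic_sub_le (n k : ℕ) : |genHarmonic 1 k - genHarmonic 1 n| ≤ n + k := by
  rw [abs_le]
  constructor <;> linarith [genHarmonic_one_nonneg n, genHarmonic_one_nonneg k,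
    genHarmonic_one_le n, genHarmonic_one_le k, n.cast_nonneg (α := ℝ), k.cast_nonneg (α := ℝ)]

lemma abs_wzF_le (n k : ℕ) : |wzF n k| ≤ (1 / 2) ^ n / ((2 * n : ℝ) + k + 1) := by
  have hfac : |2 / 3 * (genHarmonic 1 k - genHarmonic 1 n) - 7 / 15 / ((n : ℝ) + k + 1)| ≤
      (n : ℝ) + k + 1 := by
    have h1 := abs_le.1 (abs_genHarmonic_sub_le n k)
    have h2 : 0 ≤ 7 / 15 / ((n : ℝ) + k + 1) := by positivity
    have h3 : 7 / 15 / ((n : ℝ) + k + 1) ≤ 7 / 15 :=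
      div_le_self (by norm_num) (by linarith [n.cast_nonneg (α := ℝ), k.cast_nonneg (α := ℝ)])
    rw [abs_le]
    constructor <;> linarith [h1.1, h1.2]
  have hw := wzWeight_nonneg n k
  rw [wzF, abs_mul, abs_div, abs_mul, abs_pow, abs_neg, abs_one, one_pow, one_mul,
    abs_of_nonneg hw, abs_of_pos (show (0 : ℝ) < (n : ℝ) + k + 1 by positivity)]
  calc _ ≤ wzWeight n k / ((n : ℝ) + k + 1) * ((n : ℝ) + k + 1) := by gcongr
    _ = wzWeight n k := by field_simp
    _ ≤ _ := wzWeight_le n k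

lemma wzCert_nonneg (n k : ℕ) : 0 ≤ wzCert n k := by
  unfold wzCert
  positivity

lemma wzCert_le (n k : ℕ) : wzCert n k ≤ k + 4 := by
  have hn : (0 : ℝ) ≤ n := n.cast_nonneg
  have hk : (0 : ℝ) ≤ k := k.cast_nonneg
  have h1 : ((n : ℝ) + 1) / (n + k + 1) ≤ 1 := by
    rw [div_le_one (by positivity)]
    linarith
  have h2 : (6 * (n : ℝ) + 5) / (2 * (2 * n + 1)) ≤ 3 := by
    rw [div_le_iff₀ (by positivity)]
    linarith
  have h3 : (k : ℝ) / (2 * n + 1) ≤ k := div_le_self hk (by linarith)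
  unfold wzCert
  linarith

lemma abs_wzRem_le (n k : ℕ) : |wzRem n k| ≤ k + 4 := by
  have hn : (0 : ℝ) ≤ n := n.cast_nonneg
  have hk : (0 : ℝ) ≤ k := k.cast_nonneg
  have h1 : 1 / (2 * (n : ℝ) + 1) ^ 2 ≤ 1 :=
    div_le_self zero_le_one (one_le_pow₀ (by linarith))
  have h2 : (6 * (n : ℝ) + 5) / (4 * (2 * n + 1) * (n + 1)) ≤ 2 := by
    rw [div_le_iff₀ (by positivity)]
    nlinarith
  have h3 : (k : ℝ) / (2 * n + 1) ^ 2 ≤ k := div_le_self hk (one_le_pow₀ (by linarith))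
  have h4 : (2 * (n : ℝ) + 2 + k) / ((n : ℝ) + k + 1) ^ 2 ≤ 2 := by
    rw [div_le_iff₀ (by positivity)]
    nlinarith [mul_nonneg hn hk]
  have h5 : 1 / (2 * (n : ℝ) + 2) ≤ 1 := div_le_self zero_le_one (by linarith)
  have g1 : 0 ≤ 1 / (2 * (n : ℝ) + 1) ^ 2 := by positivity
  have g2 : 0 ≤ (6 * (n : ℝ) + 5) / (4 * (2 * n + 1) * (n + 1)) := by positivity
  have g3 : 0 ≤ (k : ℝ) / (2 * n + 1) ^ 2 := by positivity
  have g4 : 0 ≤ (2 * (n : ℝ) + 2 + k) / ((n : ℝ) + k + 1) ^ 2 := by positivity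
  have g5 : 0 ≤ 1 / (2 * (n : ℝ) + 2) := by positivity
  rw [wzRem, abs_le]
  constructor <;> linarith

lemma abs_wzG_le {n k : ℕ} {c : ℝ} (hc : |genHarmonic 1 k - genHarmonic 1 n| ≤ c) :
    |wzG n k| ≤ (1 / 2) ^ n * ((c + 1) * (k + 4) / ((2 * n + k + 1) * (2 * n + k + 2))) := by
  have hc0 : 0 ≤ c := (abs_nonneg _).trans hc
  have hw := wzWeight_nonneg n k
  have hfac : |2 / 3 * (genHarmonic 1 k - genHarmonic 1 n) * wzCert n k + wzRem n k| ≤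
      (c + 1) * (k + 4) := by
    refine (abs_add_le _ _).trans ?_
    have h1 : |2 / 3 * (genHarmonic 1 k - genHarmonic 1 n) * wzCert n k| ≤ c * (k + 4) := by
      rw [abs_mul, abs_of_nonneg (wzCert_nonneg n k)]
      refine mul_le_mul ?_ (wzCert_le n k) (wzCert_nonneg n k) hc0
      rw [abs_mul, abs_of_pos (by norm_num : (0 : ℝ) < 2 / 3)]
      linarith
    linarith [abs_wzRem_le n k]
  rw [wzG, abs_mul, abs_div, abs_mul, abs_pow, abs_neg, abs_one, one_pow, one_mul,
    abs_of_nonneg hw, abs_of_pos (show (0 : ℝ) < 2 * (n : ℝ) + k + 2 by positivity)]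
  calc _ ≤ (1 / 2) ^ n / ((2 * n : ℝ) + k + 1) / (2 * (n : ℝ) + k + 2) * ((c + 1) * (k + 4)) := by
        gcongr
        exact wzWeight_le n k
    _ = _ := by
        field_simp

lemma tendsto_sum_wzF : Tendsto (fun N : ℕ => ∑ k ∈ range N, wzF N k) atTop (𝓝 0) := by
  refine squeeze_zero_norm (fun N => ?_)
    (tendsto_pow_atTop_nhds_zero_of_lt_one (by norm_num : (0 : ℝ) ≤ 1 / 2) (by norm_num))
  rw [Real.norm_eq_abs]
  refine (Finset.abs_sum_le_sum_abs _ _).trans ?_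
  calc ∑ k ∈ range N, |wzF N k| ≤ ∑ _k ∈ range N, (1 / 2 : ℝ) ^ N / (N + 1) := by
        refine Finset.sum_le_sum fun k _ => (abs_wzF_le N k).trans ?_
        gcongr
        linarith [N.cast_nonneg (α := ℝ), k.cast_nonneg (α := ℝ)]
    _ = (1 / 2 : ℝ) ^ N * (N / (N + 1)) := by
        simp only [Finset.sum_const, Finset.card_range, nsmul_eq_mul]
        ring
    _ ≤ (1 / 2 : ℝ) ^ N := by
        refine mul_le_of_le_one_right (by positivity) ?_
        rw [div_le_one (by positivity)]
        linarith

lemma tendsto_sum_wzG : Tendsto (fun N : ℕ => ∑ n ∈ range N, wzG n N) atTop (𝓝 0) := by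
  have hlim := tendsto_genHarmonic_div.mul_const (8 : ℝ)
  rw [zero_mul] at hlim
  refine squeeze_zero_norm (fun N => ?_) hlim
  rw [Real.norm_eq_abs]
  refine (Finset.abs_sum_le_sum_abs _ _).trans ?_
  have hH := genHarmonic_one_nonneg N
  have hN : (0 : ℝ) ≤ N := N.cast_nonneg
  calc ∑ n ∈ range N, |wzG n N|
      ≤ ∑ n ∈ range N, (1 / 2 : ℝ) ^ n * ((genHarmonic 1 N + 1) / (N + 1) * 4) := by
        refine Finset.sum_le_sum fun n hn => (abs_wzG_le (c := genHarmonic 1 N) ?_).trans ?_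
        · have hmono := genHarmonic_one_mono (Finset.mem_range.1 hn).le
          rw [abs_of_nonneg (by linarith)]
          linarith [genHarmonic_one_nonneg n]
        · have hn0 : (0 : ℝ) ≤ n := n.cast_nonneg
          refine mul_le_mul_of_nonneg_left ?_ (by positivity)
          calc _ ≤ (genHarmonic 1 N + 1) * (N + 4) / ((N + 1) * (N + 2)) := by
                gcongr <;> linarith
            _ = (genHarmonic 1 N + 1) / (N + 1) * ((N + 4) / (N + 2)) := by
                field_simp
            _ ≤ _ := by
                gcongr
                rw [div_le_iff₀ (by positivity)]
                linarith
    _ = (∑ n ∈ range N, (1 / 2 : ℝ) ^ n) * ((genHarmonic 1 N + 1) / (N + 1) * 4) := by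
        rw [Finset.sum_mul]
    _ ≤ 2 * ((genHarmonic 1 N + 1) / (N + 1) * 4) := by
        gcongr
        exact sum_geometric_two_le N
    _ = _ := by ring

lemma summable_wzG_zero : Summable fun n => wzG n 0 := by
  refine Summable.of_norm_bounded (g := fun n : ℕ => (1 / 2 : ℝ) ^ n * 4)
    (summable_geometric_two.mul_right 4) fun n => ?_
  rw [Real.norm_eq_abs]
  refine (abs_wzG_le (abs_genHarmonic_sub_le n 0)).trans ?_
  gcongr
  rw [div_le_iff₀ (by positivity)]
  push_cast
  nlinarith [n.cast_nonneg (α := ℝ)]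

lemma risingFactorial_one (n : ℕ) : risingFactorial 1 n = n.factorial := by
  induction n with
  | zero => simp [risingFactorial]
  | succ n ih =>
    rw [risingFactorial, Finset.prod_range_succ, ← risingFactorial, ih, Nat.factorial_succ]
    push_cast
    ring

lemma risingFactorial_half_pos (n : ℕ) : 0 < risingFactorial (1 / 2) n :=
  Finset.prod_pos fun _ _ => by positivity

lemma pow_mul_risingFactorial_div (n : ℕ) :
    (-1 / 4 : ℝ) ^ (n + 1) * risingFactorial 1 (n + 1) / risingFactorial (1 / 2) (n + 1) =
      -((-1) ^ n * wzWeight n 0 * ((n : ℝ) + 1) / 2) := by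
  induction n with
  | zero => norm_num [risingFactorial, wzWeight]
  | succ n ih =>
    have hstep : ∀ a : ℝ, risingFactorial a (n + 1 + 1) =
        risingFactorial a (n + 1) * (a + (n + 1)) := fun a => by
      rw [risingFactorial, Finset.prod_range_succ, ← risingFactorial]
      push_cast
      rfl
    have hpos := (risingFactorial_half_pos (n + 1)).ne'
    rw [hstep, hstep, pow_succ, wzWeight_succ_left, pow_succ (-1 : ℝ) n]
    calc _ = (-1 / 4 : ℝ) ^ (n + 1) * risingFactorial 1 (n + 1) / risingFactorial (1 / 2) (n + 1) *
          ((-1 / 4) * (1 + (n + 1)) / (1 / 2 + (n + 1))) := by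
          field_simp
      _ = _ := by
          rw [ih]
          push_cast
          field_simp
          ring

lemma summand_eq_wzG (n : ℕ) :
    (-1 / 4 : ℝ) ^ (n + 1) * risingFactorial 1 (n + 1) /
        risingFactorial (1 / 2) (n + 1) *
        ((10 * ((n : ℝ) + 1) - 3) * genHarmonic 1 (n + 1) /
            (3 * ((n : ℝ) + 1) ^ 2 * (2 * ((n : ℝ) + 1) - 1)) -
          4 * (3 * ((n : ℝ) + 1) - 1) /
            (3 * ((n : ℝ) + 1) ^ 2 * (2 * ((n : ℝ) + 1) - 1) ^ 2)) = wzG n 0 := by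
  rw [pow_mul_risingFactorial_div, wzG, wzCert, wzRem, genHarmonic_one_succ, genHarmonic_one_zero,
    show 2 * ((n : ℝ) + 1) - 1 = 2 * n + 1 by ring]
  push_cast
  field_simp
  ring
lemma hasSum_wzF_zero : HasSum (fun k => wzF 0 k) ((∑' n : ℕ, 1 / ((n : ℝ) + 1) ^ 3) / 5) := by
  have h := (hasSum_genHarmonic_div_sq.mul_left (2 / 3)).sub
    (summable_one_div_succ_cube.hasSum.mul_left (7 / 15))
  rw [← sub_mul, show (2 / 3 - 7 / 15 : ℝ) = 5⁻¹ by norm_num, inv_mul_eq_div] at h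
  refine h.congr_fun fun k => ?_
  have := Nat.cast_ne_zero (R := ℝ).2 k.factorial_ne_zero
  simp only [wzF, wzWeight, genHarmonic_one_zero, mul_zero, zero_add, Nat.factorial_succ]
  push_cast
  field_simp
  simp

lemma hasSum_wzG_zero : HasSum (fun n => wzG n 0) ((∑' n : ℕ, 1 / ((n : ℝ) + 1) ^ 3) / 5) := by
  rw [summable_wzG_zero.hasSum_iff_tendsto_nat]
  have h := (hasSum_wzF_zero.tendsto_sum_nat.sub tendsto_sum_wzF).add tendsto_sum_wzG
  rw [sub_zero, add_zero] at h
  exact h.congr fun N => (wz_sum N N).symm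

lemma riemannZeta_three_eq : riemannZeta 3 = ((∑' n : ℕ, 1 / ((n : ℝ) + 1) ^ 3 : ℝ) : ℂ) := by
  have h := zeta_eq_tsum_one_div_nat_add_one_cpow (s := 3) (by norm_num)
  rw [h, Complex.ofReal_tsum]
  refine tsum_congr fun n => ?_
  push_cast
  norm_cast

/-- `∑_{n≥1} (−1/4)^n (1)ₙ/(1/2)ₙ [ (10n−3)Hₙ/(3n²(2n−1)) − 4(3n−1)/(3n²(2n−1)²) ] = ζ(3)/5`. -/
theorem harmonic_zeta3_fifth_series :
    ∑' n : ℕ, ((((-1 / 4 : ℝ) ^ (n + 1) * risingFactorial 1 (n + 1) /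
        risingFactorial (1 / 2) (n + 1) *
        ((10 * ((n : ℝ) + 1) - 3) * genHarmonic 1 (n + 1) /
            (3 * ((n : ℝ) + 1) ^ 2 * (2 * ((n : ℝ) + 1) - 1)) -
          4 * (3 * ((n : ℝ) + 1) - 1) /
            (3 * ((n : ℝ) + 1) ^ 2 * (2 * ((n : ℝ) + 1) - 1) ^ 2)) : ℝ)) : ℂ)
      = riemannZeta 3 / 5 := by
  simp_rw [summand_eq_wzG]
  rw [← Complex.ofReal_tsum, hasSum_wzG_zero.tsum_eq, riemannZeta_three_eq]
  push_cast
  rfl
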